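/- arXiv:1306.3838 — 2 statements merged into one kernel-verified Lean document; each statement's English description precedes it below -/
import Mathlib

section
/- Let A be a ring with a set of local units E, let G be an abelian group, and let α be a partial action of G on A such that each ideal D_t has local units and such that the partial skew group ring R = A ⋆_α G is associative. Then the following are equivalent: (1) R is simple (its only two-sided ideals are {0} and R); (2) A is G-simple and, for every e ∈ E, C_e is a field (i.e., C_e is a commutative unital ring with identity eδ_0 in which every nonzero element is invertible). -/
/-- A partial action of a group `G` on a non-unital ring `A` by two-sided ideals
`D t` and ring isomorphisms `α t : D t⁻¹ → D t` (encoded as globally defined maps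
whose behaviour only matters on the relevant ideal). -/
structure RingPartialAction (G : Type*) [Group G] (A : Type*) [NonUnitalRing A] where
  /-- The ideals `D t`, given as additive subgroups … -/
  D : G → AddSubgroup A
  /-- … which are two-sided ideals. -/
  idl_left : ∀ t (a : A), ∀ x ∈ D t, a * x ∈ D t
  idl_right : ∀ t, ∀ x ∈ D t, ∀ a : A, x * a ∈ D t
  /-- The maps `α t`, only their values on `D t⁻¹` matter. -/
  α : G → A → A
  α_mem : ∀ t, ∀ a ∈ D t⁻¹, α t a ∈ D t
  α_add : ∀ t, ∀ a ∈ D t⁻¹, ∀ b ∈ D t⁻¹, α t (a + b) = α t a + α t b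
  α_mul : ∀ t, ∀ a ∈ D t⁻¹, ∀ b ∈ D t⁻¹, α t (a * b) = α t a * α t b
  D_one : D 1 = ⊤
  α_one : ∀ a, α 1 a = a
  α_left_inv : ∀ t, ∀ a ∈ D t⁻¹, α t⁻¹ (α t a) = a
  α_mapsTo : ∀ t s, ∀ a ∈ D t⁻¹, a ∈ D s → α t a ∈ D (t * s)
  α_surjOn : ∀ t s, ∀ b ∈ D t, b ∈ D (t * s) → ∃ a, a ∈ D t⁻¹ ∧ a ∈ D s ∧ α t a = b
  α_comp : ∀ t s, ∀ a ∈ D s⁻¹, a ∈ D (s⁻¹ * t⁻¹) → α t (α s a) = α (t * s) a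

namespace RingPartialAction

variable {G : Type*} [Group G] {A : Type*} [NonUnitalRing A]

/-- The underlying additive group of the partial skew group ring `A ⋆_α G`:
finitely supported dependent functions `r` with `r t ∈ D t`,
`r = Σ_t r(t) δ_t`. -/
abbrev SkewRing (pa : RingPartialAction G A) : Type _ := Π₀ t : G, ↥(pa.D t)

/-- The element `a δ_t`. -/
noncomputable def delta [DecidableEq G] (pa : RingPartialAction G A) (t : G) (a : A)
    (ha : a ∈ pa.D t) : pa.SkewRing := DFinsupp.single t ⟨a, ha⟩

/-- `P g r`, the `g`-th coordinate projection of `r`. -/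
def P (pa : RingPartialAction G A) (g : G) (r : pa.SkewRing) : A := ↑(r g)

/-- The support of `r = Σ_t r(t) δ_t`. -/
def supp (pa : RingPartialAction G A) (r : pa.SkewRing) : Set G := {t : G | r t ≠ 0}

/-- The element `e δ_0` for `e ∈ A = D 1`. -/
noncomputable def unitDelta [DecidableEq G] (pa : RingPartialAction G A) (e : A) :
    pa.SkewRing :=
  pa.delta 1 e (by rw [pa.D_one]; exact AddSubgroup.mem_top e)

end RingPartialAction

/-- The multiplication of the partial skew group ring `A ⋆_α G`, which is *assumed*
to exist, to be biadditive, to be associative and to satisfy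
`(a δ_t)(b δ_s) = α_t(α_{t⁻¹}(a) b) δ_{ts}`. -/
structure SkewMul {G : Type*} [Group G] {A : Type*} [NonUnitalRing A] [DecidableEq G]
    (pa : RingPartialAction G A) where
  mul : pa.SkewRing → pa.SkewRing → pa.SkewRing
  left_distrib : ∀ x y z, mul x (y + z) = mul x y + mul x z
  right_distrib : ∀ x y z, mul (x + y) z = mul x z + mul y z
  mul_single : ∀ (t s : G) (a : A) (ha : a ∈ pa.D t) (b : A) (hb : b ∈ pa.D s) (g : G),
    pa.P g (mul (pa.delta t a ha) (pa.delta s b hb)) =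
      if g = t * s then pa.α t (pa.α t⁻¹ a * b) else 0
  assoc : ∀ x y z, mul (mul x y) z = mul x (mul y z)

section LocalUnits

variable (A : Type*) [NonUnitalRing A]

/-- `A` is a ring with local units. -/
def HasLocalUnits : Prop :=
  ∀ F : Finset A, ∃ e : A, e * e = e ∧ ∀ a ∈ F, e * a = a ∧ a * e = a

variable {A}

/-- `E` is a set of local units for `A`. -/
def IsLocalUnitSet (E : Set A) : Prop :=
  (∀ e ∈ E, e * e = e) ∧ ∀ F : Finset A, ∃ e ∈ E, ∀ a ∈ F, e * a = a ∧ a * e = a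

/-- The (non-unital, non-necessarily full) subring `S ⊆ A` has local units. -/
def SubsetHasLocalUnits (S : Set A) : Prop :=
  ∀ F : Finset A, (∀ a ∈ F, a ∈ S) →
    ∃ e ∈ S, e * e = e ∧ ∀ a ∈ F, e * a = a ∧ a * e = a

/-- `I` is a two-sided ideal of `A` (as a set). -/
def IsRingIdeal (I : Set A) : Prop :=
  (0 : A) ∈ I ∧ (∀ a ∈ I, ∀ b ∈ I, a + b ∈ I) ∧ (∀ a ∈ I, -a ∈ I) ∧
    (∀ a ∈ I, ∀ b : A, a * b ∈ I ∧ b * a ∈ I)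

end LocalUnits

section Invariance

variable {G : Type*} [Group G] {A : Type*} [NonUnitalRing A]

/-- `I ⊆ A` is `G`-invariant: `α t (I ∩ D t⁻¹) ⊆ I ∩ D t`. -/
def GInvariant (pa : RingPartialAction G A) (I : Set A) : Prop :=
  ∀ t : G, ∀ a ∈ I, a ∈ pa.D t⁻¹ → pa.α t a ∈ I ∧ pa.α t a ∈ pa.D t

/-- `A` is `G`-simple: the only `G`-invariant ideals of `A` are `{0}` and `A`. -/
def GSimple (pa : RingPartialAction G A) : Prop :=
  ∀ I : Set A, IsRingIdeal I → GInvariant pa I → I = {0} ∨ I = Set.univ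

variable [DecidableEq G]

/-- `J` is a two-sided ideal of the partial skew group ring. -/
def IsSkewIdeal {pa : RingPartialAction G A} (S : SkewMul pa) (J : Set pa.SkewRing) : Prop :=
  (0 : pa.SkewRing) ∈ J ∧ (∀ x ∈ J, ∀ y ∈ J, x + y ∈ J) ∧ (∀ x ∈ J, -x ∈ J) ∧
    (∀ x ∈ J, ∀ y : pa.SkewRing, S.mul x y ∈ J ∧ S.mul y x ∈ J)

/-- The corner `x R x` of the partial skew group ring. -/
def corner {pa : RingPartialAction G A} (S : SkewMul pa) (x : pa.SkewRing) :
    Set pa.SkewRing := {y | ∃ z, y = S.mul x (S.mul z x)}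

/-- `C_e`: the center of the corner `eδ_0 R eδ_0`. -/
def Ce {pa : RingPartialAction G A} (S : SkewMul pa) (e : A) : Set pa.SkewRing :=
  {x ∈ corner S (pa.unitDelta e) |
    ∀ y ∈ corner S (pa.unitDelta e), S.mul x y = S.mul y x}

end Invariance

/-!
Let `J` be a nonzero ideal of `R = A ⋆_α G`. Translating by some `b δ_{t⁻¹}`, choose a nonzero
`x ∈ J` whose support `F` contains the identity `1` of `G` and has the least possible size. Because
`G` is abelian, conjugation by homogeneous elements does not enlarge supports, so the coefficients
at `1` of the elements of `J` supported in `F` form a `G`-invariant ideal of `A`, which is all of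
`A` when `A` is `G`-simple. Hence, for an idempotent `e`, some `y ∈ J` in the corner
`eδ_1 R eδ_1` is supported in `F` and has coefficient `e` at `1`. For a homogeneous `w` in the
corner, `[y, w] = [y - eδ_1, w]` lies in `J` and its support is smaller than `F`, so it vanishes:
`y` is central in the corner. If the center is a field and `y ≠ 0`, then `y` is invertible there,
so `eδ_1 ∈ J`; if `y = 0`, then `e = 0`.

Conversely, let `R` be simple and let `x ≠ 0` be central in the corner of an idempotent `u`. The
ideal of all `r` with `uRrRu ⊆ xR` contains `x`, hence `u`, and this gives an inverse of `x`.
A `G`-invariant ideal `I` of `A` yields the ideal of `R` of all elements with coefficients in `I`,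
so `A` is `G`-simple.
-/

section Corner

variable {R : Type*}

theorem mul_comm_of_inverse_mem_corner [Semigroup R] {e x y w : R} (hxy : x * y = e)
    (hyx : y * x = e) (hew : e * w = w) (hwe : w * e = w) (hxw : x * w = w * x) :
    y * w = w * y :=
  calc
    y * w = y * (w * (x * y)) := by rw [hxy, hwe]
    _ = y * (w * x) * y := by simp only [mul_assoc]
    _ = y * (x * w) * y := by rw [hxw]
    _ = y * x * w * y := by simp only [mul_assoc]
    _ = w * y := by rw [hyx, hew]

variable [NonUnitalRing R]

theorem isRingIdeal_setOf_dvd_sandwich (x e : R) :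
    IsRingIdeal {r : R | ∀ p q, x ∣ e * p * r * q * e} := by
  refine ⟨fun p q ↦ by simp, fun a ha b hb p q ↦ ?_, fun a ha p q ↦ ?_,
    fun a ha b ↦ ⟨fun p q ↦ ?_, fun p q ↦ ?_⟩⟩
  · simpa only [mul_add, add_mul] using dvd_add (ha p q) (hb p q)
  · simpa only [mul_neg, neg_mul, dvd_neg] using ha p q
  · simpa only [mul_assoc] using ha p (b * q)
  · simpa only [mul_assoc] using ha (p * b) q

theorem exists_inverse_of_central_corner_of_simple
    (hR : ∀ J : Set R, IsRingIdeal J → J = {0} ∨ J = Set.univ) {e x : R}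
    (he : IsIdempotentElem e) (hex : e * x = x) (hxe : x * e = x)
    (hx : ∀ y, e * y = y → y * e = y → x * y = y * x) (hx0 : x ≠ 0) :
    ∃ y, e * y = y ∧ y * e = y ∧ x * y = e ∧ y * x = e := by
  have he' : e * e = e := he
  have hcorner (p : R) : e * (e * p * e) = e * p * e ∧ e * p * e * e = e * p * e :=
    ⟨by simp only [← mul_assoc, he'], by simp only [mul_assoc, he']⟩
  have x_mem : x ∈ {r : R | ∀ p q, x ∣ e * p * r * q * e} := fun p q ↦ by
    have hcomm : x * (e * p * e) = e * p * e * x := hx _ (hcorner p).1 (hcorner p).2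
    have hmove : e * p * x = x * (e * p * e) := by rw [hcomm, mul_assoc (e * p), hex]
    exact ⟨e * p * e * q * e, by rw [hmove]; simp only [mul_assoc]⟩
  rcases hR _ (isRingIdeal_setOf_dvd_sandwich x e) with h | h
  · rw [h] at x_mem
    exact absurd x_mem hx0
  have e_mem : e ∈ {r : R | ∀ p q, x ∣ e * p * r * q * e} := h ▸ Set.mem_univ e
  obtain ⟨c, hc⟩ : x ∣ e := by simpa only [he'] using e_mem e e
  have hxy : x * (e * c * e) = e := by
    rw [← mul_assoc, ← mul_assoc, hxe, ← hc, he']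
  exact ⟨e * c * e, (hcorner c).1, (hcorner c).2, hxy, by
    rw [← hx _ (hcorner c).1 (hcorner c).2, hxy]⟩

end Corner

/-- A subset `S` of a ring is s-unital if each of its elements has a two-sided unit in `S`. Unlike
local units, these units need be neither idempotent nor common to several elements. The condition
is imposed on the ideals of a partial action. -/
def IsSUnital {A : Type*} [NonUnitalRing A] (S : Set A) : Prop :=
  ∀ a ∈ S, ∃ u ∈ S, u * a = a ∧ a * u = a

theorem SubsetHasLocalUnits.isSUnital {A : Type*} [NonUnitalRing A] {S : Set A}
    (hS : SubsetHasLocalUnits S) : IsSUnital S := fun a ha ↦ by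
  obtain ⟨u, hu, -, hua⟩ := hS {a} (by simpa using ha)
  exact ⟨u, hu, hua a (Finset.mem_singleton_self a)⟩

open scoped Pointwise

namespace RingPartialAction

section Group

variable {G : Type*} [Group G] {A : Type*} [NonUnitalRing A] (pa : RingPartialAction G A)

theorem mem_D_one (a : A) : a ∈ pa.D 1 := pa.D_one ▸ AddSubgroup.mem_top a

theorem α_zero (t : G) : pa.α t 0 = 0 := by
  simpa using pa.α_add t 0 (zero_mem _) 0 (zero_mem _)

theorem α_inv_mem {t : G} {a : A} (ha : a ∈ pa.D t) : pa.α t⁻¹ a ∈ pa.D t⁻¹ :=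
  pa.α_mem t⁻¹ a (by rwa [inv_inv])

theorem α_right_inv {t : G} {a : A} (ha : a ∈ pa.D t) : pa.α t (pa.α t⁻¹ a) = a := by
  simpa only [inv_inv] using pa.α_left_inv t⁻¹ a (by rwa [inv_inv])

@[simp]
theorem P_zero (g : G) : pa.P g 0 = 0 := rfl

@[simp]
theorem P_add (g : G) (x y : pa.SkewRing) : pa.P g (x + y) = pa.P g x + pa.P g y := rfl

@[simp]
theorem P_neg (g : G) (x : pa.SkewRing) : pa.P g (-x) = -pa.P g x := rfl

@[simp]
theorem P_sub (g : G) (x y : pa.SkewRing) : pa.P g (x - y) = pa.P g x - pa.P g y := rfl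

theorem P_mem (g : G) (x : pa.SkewRing) : pa.P g x ∈ pa.D g := (x g).2

variable {pa}

theorem P_ext {x y : pa.SkewRing} (h : ∀ g, pa.P g x = pa.P g y) : x = y :=
  DFinsupp.ext fun g ↦ Subtype.ext (h g)

theorem mem_supp {x : pa.SkewRing} {t : G} : t ∈ pa.supp x ↔ pa.P t x ≠ 0 :=
  (ZeroMemClass.coe_eq_zero (x := x t)).not.symm

theorem supp_subset_iff {x : pa.SkewRing} {F : Set G} :
    pa.supp x ⊆ F ↔ ∀ t ∉ F, pa.P t x = 0 :=
  forall_congr' fun t ↦ by rw [mem_supp]; tauto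

theorem finite_supp (x : pa.SkewRing) : (pa.supp x).Finite := DFinsupp.finite_support x

theorem supp_nonempty {x : pa.SkewRing} (hx : x ≠ 0) : (pa.supp x).Nonempty := by
  contrapose! hx
  exact P_ext (supp_subset_iff.1 hx.subset · (Set.notMem_empty _))

theorem supp_sub_subset {x y : pa.SkewRing} {F : Set G} (hx : pa.supp x ⊆ F)
    (hy : pa.supp y ⊆ F) : pa.supp (x - y) ⊆ F :=
  supp_subset_iff.2 fun t ht ↦ by
    rw [P_sub, supp_subset_iff.1 hx t ht, supp_subset_iff.1 hy t ht, sub_zero]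

/-- The set of coefficients at `1` of the elements of `J` with support in `F`. For an ideal `J` of
the partial skew group ring it is the ideal of `A` to which `G`-simplicity is applied. -/
def coeffOne (J : Set pa.SkewRing) (F : Set G) : Set A := pa.P 1 '' {x ∈ J | pa.supp x ⊆ F}

end Group

section Delta

variable {G : Type*} [Group G] [DecidableEq G] {A : Type*} [NonUnitalRing A]
  {pa : RingPartialAction G A}

theorem P_delta (g t : G) (a : A) (ha : a ∈ pa.D t) :
    pa.P g (pa.delta t a ha) = if g = t then a else 0 := by
  rcases eq_or_ne g t with rfl | h
  · simp [P, delta]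
  · simp [P, delta, h, h.symm]

theorem P_unitDelta (g : G) (a : A) : pa.P g (pa.unitDelta a) = if g = 1 then a else 0 :=
  P_delta g 1 a _

theorem supp_delta_subset (t : G) (a : A) (ha : a ∈ pa.D t) :
    pa.supp (pa.delta t a ha) ⊆ {t} :=
  supp_subset_iff.2 fun g hg ↦ by rw [P_delta, if_neg (mt Set.mem_singleton_iff.2 hg)]

theorem supp_unitDelta_subset (a : A) : pa.supp (pa.unitDelta a) ⊆ 1 :=
  supp_delta_subset 1 a _

theorem skewRing_induction {p : pa.SkewRing → Prop} (x : pa.SkewRing) (zero : p 0)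
    (delta : ∀ t a ha, p (pa.delta t a ha)) (add : ∀ x y, p x → p y → p (x + y)) : p x :=
  DFinsupp.induction x zero fun t a _ _ _ h ↦ add _ _ (delta t a.1 a.2) h

end Delta

end RingPartialAction

open RingPartialAction

namespace SkewMul

variable {G : Type*} [Group G] [DecidableEq G] {A : Type*} [NonUnitalRing A]
  {pa : RingPartialAction G A} (S : SkewMul pa)

protected theorem zero_mul (x : pa.SkewRing) : S.mul 0 x = 0 := by
  simpa using S.right_distrib 0 0 x

protected theorem mul_zero (x : pa.SkewRing) : S.mul x 0 = 0 := by
  simpa using S.left_distrib x 0 0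

/-- The partial skew group ring as a bundled ring. It is not an instance because the multiplication
`S` cannot be inferred from the type `pa.SkewRing`. -/
abbrev toNonUnitalRing : NonUnitalRing pa.SkewRing :=
  { (inferInstance : AddCommGroup pa.SkewRing) with
    mul := S.mul
    left_distrib := S.left_distrib
    right_distrib := S.right_distrib
    mul_assoc := S.assoc
    zero_mul := S.zero_mul
    mul_zero := S.mul_zero }

protected theorem sub_mul (x y z : pa.SkewRing) : S.mul (x - y) z = S.mul x z - S.mul y z :=
  let _ := S.toNonUnitalRing
  sub_mul x y z

protected theorem mul_sub (x y z : pa.SkewRing) : S.mul x (y - z) = S.mul x y - S.mul x z :=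
  let _ := S.toNonUnitalRing
  mul_sub x y z

theorem P_mul_delta (x : pa.SkewRing) (g s : G) (b : A) (hb : b ∈ pa.D s) :
    pa.P g (S.mul x (pa.delta s b hb)) =
      pa.α (g * s⁻¹) (pa.α (g * s⁻¹)⁻¹ (pa.P (g * s⁻¹) x) * b) := by
  induction x using skewRing_induction with
  | zero => simp [S.zero_mul, α_zero]
  | delta t a ha =>
    rw [S.mul_single, P_delta]
    by_cases h : g = t * s
    · rw [if_pos h, if_pos (mul_inv_eq_iff_eq_mul.2 h), mul_inv_eq_iff_eq_mul.2 h]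
    · rw [if_neg h, if_neg (mt mul_inv_eq_iff_eq_mul.1 h), α_zero, zero_mul, α_zero]
  | add x y hx hy =>
    have hmem (x : pa.SkewRing) : pa.P (g * s⁻¹) x ∈ pa.D (g * s⁻¹)⁻¹⁻¹ := by
      rw [inv_inv]; exact pa.P_mem _ x
    have hmem_mul (x : pa.SkewRing) :=
      pa.idl_right _ _ (pa.α_mem _ _ (hmem x)) b
    rw [S.right_distrib, P_add, P_add, hx, hy, pa.α_add _ _ (hmem x) _ (hmem y), add_mul,
      pa.α_add _ _ (hmem_mul x) _ (hmem_mul y)]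

theorem P_delta_mul (x : pa.SkewRing) (g t : G) (a : A) (ha : a ∈ pa.D t) :
    pa.P g (S.mul (pa.delta t a ha) x) = pa.α t (pa.α t⁻¹ a * pa.P (t⁻¹ * g) x) := by
  induction x using skewRing_induction with
  | zero => simp [S.mul_zero, α_zero]
  | delta s b hb =>
    rw [S.mul_single, P_delta]
    by_cases h : g = t * s
    · rw [if_pos h, if_pos (inv_mul_eq_iff_eq_mul.2 h)]
    · rw [if_neg h, if_neg (mt inv_mul_eq_iff_eq_mul.1 h), mul_zero, α_zero]
  | add x y hx hy =>
    have hmem_mul (x : pa.SkewRing) :=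
      pa.idl_right _ _ (pa.α_inv_mem ha) (pa.P (t⁻¹ * g) x)
    rw [S.left_distrib, P_add, P_add, hx, hy, mul_add,
      pa.α_add _ _ (hmem_mul x) _ (hmem_mul y)]

theorem P_unitDelta_mul (x : pa.SkewRing) (g : G) (a : A) :
    pa.P g (S.mul (pa.unitDelta a) x) = a * pa.P g x := by
  simpa only [unitDelta, inv_one, one_mul, pa.α_one] using S.P_delta_mul x g 1 a (pa.mem_D_one a)

theorem P_one_mul_unitDelta (x : pa.SkewRing) (a : A) :
    pa.P 1 (S.mul x (pa.unitDelta a)) = pa.P 1 x * a := by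
  simpa only [unitDelta, inv_one, one_mul, pa.α_one] using S.P_mul_delta x 1 1 a (pa.mem_D_one a)

theorem unitDelta_mul_unitDelta {e : A} (he : IsIdempotentElem e) :
    S.mul (pa.unitDelta e) (pa.unitDelta e) = pa.unitDelta e :=
  P_ext fun g ↦ by
    rw [P_unitDelta_mul, P_unitDelta, mul_ite, he.eq, mul_zero]

theorem unitDelta_mul_delta {e a : A} (h : e * a = a) (t : G) (ha : a ∈ pa.D t) :
    S.mul (pa.unitDelta e) (pa.delta t a ha) = pa.delta t a ha :=
  P_ext fun g ↦ by rw [P_unitDelta_mul, P_delta, mul_ite, h, mul_zero]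

theorem supp_mul_subset (x y : pa.SkewRing) :
    pa.supp (S.mul x y) ⊆ pa.supp x * pa.supp y := by
  refine supp_subset_iff.2 fun g hg ↦ ?_
  have hxy (t : G) : pa.P t x = 0 ∨ pa.P (t⁻¹ * g) y = 0 := by
    by_contra! h
    exact hg ⟨t, mem_supp.2 h.1, t⁻¹ * g, mem_supp.2 h.2, mul_inv_cancel_left t g⟩
  clear hg
  induction x using DFinsupp.induction with
  | h0 => rw [S.zero_mul, P_zero]
  | ha t a f hft ha ih =>
    have hsingle : DFinsupp.single t a = pa.delta t a a.2 := rfl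
    have hf : pa.P t f = 0 := congrArg Subtype.val hft
    simp only [hsingle, P_add, P_delta] at hxy ⊢
    have hy : pa.P (t⁻¹ * g) y = 0 := (hxy t).resolve_left (by simpa [hf] using ha)
    rw [S.right_distrib, P_add, P_delta_mul, hy, mul_zero, pa.α_zero, zero_add]
    refine ih fun s ↦ ?_
    rcases eq_or_ne s t with rfl | hst
    · exact Or.inl hf
    · simpa [hst] using hxy s

theorem supp_mul_unitDelta_subset (x : pa.SkewRing) (a : A) :
    pa.supp (S.mul x (pa.unitDelta a)) ⊆ pa.supp x := by
  simpa using (S.supp_mul_subset x _).trans (Set.mul_subset_mul_left (supp_unitDelta_subset a))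

theorem supp_unitDelta_mul_subset (x : pa.SkewRing) (a : A) :
    pa.supp (S.mul (pa.unitDelta a) x) ⊆ pa.supp x := by
  simpa using (S.supp_mul_subset _ x).trans (Set.mul_subset_mul_right (supp_unitDelta_subset a))

theorem mem_corner_iff {e : A} (he : IsIdempotentElem e) {x : pa.SkewRing} :
    x ∈ corner S (pa.unitDelta e) ↔
      S.mul (pa.unitDelta e) x = x ∧ S.mul x (pa.unitDelta e) = x := by
  have hu := S.unitDelta_mul_unitDelta (pa := pa) he
  constructor
  · rintro ⟨z, rfl⟩
    exact ⟨by rw [← S.assoc, hu], by rw [S.assoc, S.assoc, hu]⟩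
  · rintro ⟨hux, hxu⟩
    exact ⟨x, by rw [hxu, hux]⟩

/-- `C_e`, the center of the corner `eδ_1 R eδ_1`, is a field with identity `eδ_1`. The zero ring,
which is `C_e` for `e = 0`, is allowed. -/
def CenterIsField (e : A) : Prop :=
  pa.unitDelta e ∈ Ce S e ∧
    (∀ x ∈ Ce S e, S.mul (pa.unitDelta e) x = x ∧ S.mul x (pa.unitDelta e) = x) ∧
    (∀ x ∈ Ce S e, ∀ y ∈ Ce S e, S.mul x y = S.mul y x) ∧
    (∀ x ∈ Ce S e, x ≠ 0 →
      ∃ y ∈ Ce S e, S.mul x y = pa.unitDelta e ∧ S.mul y x = pa.unitDelta e)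

variable {S}

theorem centerIsField_of_simple
    (hS : ∀ J : Set pa.SkewRing, IsSkewIdeal S J → J = {0} ∨ J = Set.univ) {e : A}
    (he : IsIdempotentElem e) : CenterIsField S e := by
  have hu := S.unitDelta_mul_unitDelta (pa := pa) he
  have hcorner {x : pa.SkewRing} := S.mem_corner_iff he (x := x)
  refine ⟨⟨hcorner.2 ⟨hu, hu⟩, fun y hy ↦ ?_⟩, fun x hx ↦ hcorner.1 hx.1,
    fun x hx y hy ↦ hx.2 y hy.1, fun x hx hx0 ↦ ?_⟩
  · rw [(hcorner.1 hy).1, (hcorner.1 hy).2]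
  · let _ := S.toNonUnitalRing
    obtain ⟨hux, hxu⟩ := hcorner.1 hx.1
    obtain ⟨y, huy, hyu, hxy, hyx⟩ := exists_inverse_of_central_corner_of_simple hS hu hux hxu
      (fun y huy hyu ↦ hx.2 y (hcorner.2 ⟨huy, hyu⟩)) hx0
    refine ⟨y, ⟨hcorner.2 ⟨huy, hyu⟩, fun w hw ↦ ?_⟩, hxy, hyx⟩
    exact mul_comm_of_inverse_mem_corner hxy hyx (hcorner.1 hw).1 (hcorner.1 hw).2 (hx.2 w hw)

variable (S) in
theorem isSkewIdeal_setOf_forall_P_mem {I : Set A} (hI : IsRingIdeal I) (hGI : GInvariant pa I) :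
    IsSkewIdeal S {x | ∀ t, pa.P t x ∈ I} := by
  obtain ⟨zero_mem, add_mem, neg_mem, mul_mem⟩ := hI
  refine ⟨fun _ ↦ zero_mem, fun x hx y hy t ↦ add_mem _ (hx t) _ (hy t),
    fun x hx t ↦ neg_mem _ (hx t), fun x hx y ↦ ?_⟩
  induction y using skewRing_induction with
  | zero =>
    rw [S.mul_zero, S.zero_mul]
    exact ⟨fun _ ↦ zero_mem, fun _ ↦ zero_mem⟩
  | delta s b hb =>
    refine ⟨fun g ↦ ?_, fun g ↦ ?_⟩
    · have hα : pa.α (g * s⁻¹)⁻¹ (pa.P (g * s⁻¹) x) ∈ I :=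
        (hGI _ _ (hx _) (by rw [inv_inv]; exact pa.P_mem _ x)).1
      rw [P_mul_delta]
      exact (hGI _ _ (mul_mem _ hα b).1
        (pa.idl_right _ _ (pa.α_inv_mem (pa.P_mem _ x)) b)).1
    · rw [P_delta_mul]
      exact (hGI _ _ (mul_mem _ (hx _) _).2 (pa.idl_right _ _ (pa.α_inv_mem hb) _)).1
  | add y z hy hz =>
    rw [S.left_distrib, S.right_distrib]
    exact ⟨fun t ↦ add_mem _ (hy.1 t) _ (hz.1 t), fun t ↦ add_mem _ (hy.2 t) _ (hz.2 t)⟩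

theorem gSimple_of_simple
    (hS : ∀ J : Set pa.SkewRing, IsSkewIdeal S J → J = {0} ∨ J = Set.univ) : GSimple pa := by
  intro I hI hGI
  have unitDelta_mem {a : A} : pa.unitDelta a ∈ {x | ∀ t, pa.P t x ∈ I} ↔ a ∈ I := by
    refine ⟨fun h ↦ by simpa [P_unitDelta] using h 1, fun h t ↦ ?_⟩
    rw [P_unitDelta]
    split_ifs
    exacts [h, hI.1]
  refine (hS _ (S.isSkewIdeal_setOf_forall_P_mem hI hGI)).imp (fun h ↦ ?_) fun h ↦ ?_
  · refine Set.Subset.antisymm (fun a ha ↦ ?_) (Set.singleton_subset_iff.2 hI.1)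
    have ha0 : pa.unitDelta a = 0 := by rwa [← unitDelta_mem, h] at ha
    simpa [P_unitDelta] using congrArg (pa.P 1) ha0
  · exact Set.eq_univ_of_forall fun a ↦ unitDelta_mem.1 (h ▸ Set.mem_univ _)

end SkewMul

namespace IsSkewIdeal

section Group

variable {G : Type*} [Group G] [DecidableEq G] {A : Type*} [NonUnitalRing A]
  {pa : RingPartialAction G A} {S : SkewMul pa} {J : Set pa.SkewRing}

theorem mul_mem_right (hJ : IsSkewIdeal S J) {x : pa.SkewRing} (hx : x ∈ J) (y : pa.SkewRing) :
    S.mul x y ∈ J :=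
  (hJ.2.2.2 x hx y).1

theorem mul_mem_left (hJ : IsSkewIdeal S J) {x : pa.SkewRing} (hx : x ∈ J) (y : pa.SkewRing) :
    S.mul y x ∈ J :=
  (hJ.2.2.2 x hx y).2

theorem sub_mem (hJ : IsSkewIdeal S J) {x y : pa.SkewRing} (hx : x ∈ J) (hy : y ∈ J) :
    x - y ∈ J :=
  sub_eq_add_neg x y ▸ hJ.2.1 x hx _ (hJ.2.2.1 y hy)

theorem eq_univ_of_unitDelta_mem (hJ : IsSkewIdeal S J) {E : Set A}
    (hE : ∀ a, ∃ e ∈ E, e * a = a) (hEJ : ∀ e ∈ E, pa.unitDelta e ∈ J) : J = Set.univ := by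
  refine Set.eq_univ_of_forall fun x ↦ ?_
  induction x using skewRing_induction with
  | zero => exact hJ.1
  | add x y hx hy => exact hJ.2.1 x hx y hy
  | delta t a ha =>
    obtain ⟨e, he, hea⟩ := hE a
    exact S.unitDelta_mul_delta hea t ha ▸ hJ.mul_mem_right (hEJ e he) _

theorem isRingIdeal_coeffOne (hJ : IsSkewIdeal S J) (F : Set G) :
    IsRingIdeal (coeffOne J F) := by
  have add_mem_coeffOne : ∀ a ∈ coeffOne J F, ∀ b ∈ coeffOne J F, a + b ∈ coeffOne J F := by
    rintro _ ⟨x, ⟨hx, hxF⟩, rfl⟩ _ ⟨y, ⟨hy, hyF⟩, rfl⟩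
    refine ⟨x + y, ⟨hJ.2.1 x hx y hy, supp_subset_iff.2 fun t ht ↦ ?_⟩, rfl⟩
    rw [P_add, supp_subset_iff.1 hxF t ht, supp_subset_iff.1 hyF t ht, add_zero]
  refine ⟨⟨0, ⟨hJ.1, supp_subset_iff.2 fun _ _ ↦ rfl⟩, rfl⟩, add_mem_coeffOne, ?_, ?_⟩
  · rintro _ ⟨x, ⟨hx, hxF⟩, rfl⟩
    refine ⟨-x, ⟨hJ.2.2.1 x hx, supp_subset_iff.2 fun t ht ↦ ?_⟩, rfl⟩
    rw [P_neg, supp_subset_iff.1 hxF t ht, neg_zero]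
  · rintro _ ⟨x, ⟨hx, hxF⟩, rfl⟩ b
    exact ⟨⟨_, ⟨hJ.mul_mem_right hx (pa.unitDelta b), (S.supp_mul_unitDelta_subset x b).trans hxF⟩,
        S.P_one_mul_unitDelta x b⟩,
      ⟨_, ⟨hJ.mul_mem_left hx (pa.unitDelta b), (S.supp_unitDelta_mul_subset x b).trans hxF⟩,
        S.P_unitDelta_mul x 1 b⟩⟩

theorem exists_one_mem_supp_minimal (hJ : IsSkewIdeal S J)
    (hD : ∀ t, IsSUnital (pa.D t : Set A)) {y : pa.SkewRing} (hy : y ∈ J) (hy0 : y ≠ 0) :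
    ∃ x ∈ J, 1 ∈ pa.supp x ∧ ∀ z ∈ J, z ≠ 0 → (pa.supp x).ncard ≤ (pa.supp z).ncard := by
  obtain ⟨x, ⟨hx, hx0⟩, hmin⟩ := exists_minimalFor_of_wellFoundedLT
    (fun z ↦ z ∈ J ∧ z ≠ 0) (fun z ↦ (pa.supp z).ncard) ⟨y, hy, hy0⟩
  obtain ⟨t, ht⟩ := supp_nonempty hx0
  obtain ⟨u, hu, -, hxu⟩ := hD t⁻¹ _ (pa.α_inv_mem (pa.P_mem t x))
  have hP : pa.P 1 (S.mul x (pa.delta t⁻¹ u hu)) = pa.P t x := by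
    rw [S.P_mul_delta, one_mul, inv_inv, hxu, pa.α_right_inv (pa.P_mem t x)]
  have hcard : (pa.supp (S.mul x (pa.delta t⁻¹ u hu))).ncard ≤ (pa.supp x).ncard := by
    have hsub : pa.supp (S.mul x (pa.delta t⁻¹ u hu)) ⊆ (· * t⁻¹) '' pa.supp x := by
      rw [← Set.mul_singleton]
      exact (S.supp_mul_subset x _).trans (Set.mul_subset_mul_left (supp_delta_subset _ u hu))
    exact (Set.ncard_le_ncard hsub ((finite_supp x).image _)).trans
      (Set.ncard_image_le (finite_supp x))
  refine ⟨_, hJ.mul_mem_right hx (pa.delta t⁻¹ u hu), ?_, fun z hz hz0 ↦ hcard.trans ?_⟩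
  · rwa [mem_supp, hP, ← mem_supp]
  · exact (le_total _ _).elim id (hmin ⟨hz, hz0⟩)

end Group

section CommGroup

variable {G : Type*} [CommGroup G] [DecidableEq G] {A : Type*} [NonUnitalRing A]
  {pa : RingPartialAction G A} {S : SkewMul pa} {J : Set pa.SkewRing}

theorem gInvariant_coeffOne (hJ : IsSkewIdeal S J) (hD : ∀ t, IsSUnital (pa.D t : Set A))
    (F : Set G) : GInvariant pa (coeffOne J F) := by
  rintro t _ ⟨x, ⟨hx, hxF⟩, rfl⟩ hPx
  obtain ⟨u, hu, hux, hxu⟩ := hD t⁻¹ _ hPx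
  let v := pa.delta t (pa.α t u) (pa.α_mem t u hu)
  let w := pa.delta t⁻¹ u hu
  have hsupp : pa.supp (S.mul (S.mul v x) w) ⊆ F := calc
    pa.supp (S.mul (S.mul v x) w) ⊆ pa.supp v * pa.supp x * pa.supp w :=
      (S.supp_mul_subset _ _).trans (Set.mul_subset_mul_right (S.supp_mul_subset _ _))
    _ ⊆ {t} * F * {t⁻¹} := Set.mul_subset_mul
      (Set.mul_subset_mul (supp_delta_subset _ _ _) hxF) (supp_delta_subset _ _ _)
    _ = F := by rw [mul_right_comm, Set.singleton_mul_singleton, mul_inv_cancel,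
      Set.singleton_one, one_mul]
  have hP : pa.P 1 (S.mul (S.mul v x) w) = pa.α t (pa.P 1 x) := by
    rw [S.P_mul_delta, one_mul, inv_inv, S.P_delta_mul, pa.α_left_inv t u hu, inv_mul_cancel,
      hux, pa.α_left_inv t _ hPx, hxu]
  exact ⟨⟨_, ⟨hJ.mul_mem_right (hJ.mul_mem_left hx v) w, hsupp⟩, hP⟩, pa.α_mem t _ hPx⟩

theorem mul_comm_of_supp_minimal (hJ : IsSkewIdeal S J) {F : Set G} (hF : F.Finite) (h1 : 1 ∈ F)
    (hmin : ∀ z ∈ J, z ≠ 0 → F.ncard ≤ (pa.supp z).ncard) {e : A} {y w : pa.SkewRing}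
    (hy : y ∈ J) (hyF : pa.supp y ⊆ F) (hye : pa.P 1 y = e)
    (huw : S.mul (pa.unitDelta e) w = w) (hwu : S.mul w (pa.unitDelta e) = w)
    {s : G} (hw : pa.supp w ⊆ {s}) : S.mul y w = S.mul w y := by
  set v := y - pa.unitDelta e with hv
  have hcomm : S.mul y w - S.mul w y = S.mul v w - S.mul w v := by
    rw [hv, S.sub_mul, S.mul_sub, huw, hwu, sub_sub_sub_cancel_right]
  have hvF : pa.supp v ⊆ F \ {1} := by
    have hvF : pa.supp v ⊆ F := supp_sub_subset hyF
      ((supp_unitDelta_subset e).trans (Set.singleton_subset_iff.2 h1))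
    refine Set.subset_sdiff_singleton hvF fun h ↦ mem_supp.1 h ?_
    rw [hv, P_sub, hye, P_unitDelta, if_pos rfl, sub_self]
  have hsupp : pa.supp (S.mul v w - S.mul w v) ⊆ (· * s) '' (F \ {1}) := by
    rw [← Set.mul_singleton]
    refine supp_sub_subset ((S.supp_mul_subset v w).trans (Set.mul_subset_mul hvF hw)) ?_
    rw [mul_comm (F \ {1})]
    exact (S.supp_mul_subset w v).trans (Set.mul_subset_mul hw hvF)
  have hcard : (pa.supp (S.mul v w - S.mul w v)).ncard < F.ncard := calc
    _ ≤ ((· * s) '' (F \ {1})).ncard := Set.ncard_le_ncard hsupp (hF.sdiff.image _)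
    _ ≤ (F \ {1}).ncard := Set.ncard_image_le hF.sdiff
    _ < F.ncard := Set.ncard_sdiff_singleton_lt_of_mem h1 hF
  rw [← sub_eq_zero]
  by_contra h0
  refine (hmin _ (hJ.sub_mem (hJ.mul_mem_right hy w) (hJ.mul_mem_left hy w)) h0).not_gt ?_
  rwa [hcomm]

theorem mem_Ce_of_supp_minimal (hJ : IsSkewIdeal S J) {F : Set G} (hF : F.Finite) (h1 : 1 ∈ F)
    (hmin : ∀ z ∈ J, z ≠ 0 → F.ncard ≤ (pa.supp z).ncard) {e : A} (he : IsIdempotentElem e)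
    {y : pa.SkewRing} (hy : y ∈ J) (hyF : pa.supp y ⊆ F) (hye : pa.P 1 y = e)
    (hyc : y ∈ corner S (pa.unitDelta e)) : y ∈ Ce S e := by
  refine ⟨hyc, ?_⟩
  rintro _ ⟨z, rfl⟩
  induction z using skewRing_induction with
  | zero => simp only [S.zero_mul, S.mul_zero]
  | add z z' hz hz' => simp only [S.left_distrib, S.right_distrib, hz, hz']
  | delta s b hb =>
    obtain ⟨huw, hwu⟩ := (S.mem_corner_iff he).1 ⟨pa.delta s b hb, rfl⟩
    have hsupp := (S.supp_unitDelta_mul_subset _ e).trans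
      ((S.supp_mul_unitDelta_subset _ e).trans (supp_delta_subset s b hb))
    exact hJ.mul_comm_of_supp_minimal hF h1 hmin hy hyF hye huw hwu hsupp

theorem exists_mem_Ce_of_gSimple (hJ : IsSkewIdeal S J) (hD : ∀ t, IsSUnital (pa.D t : Set A))
    (hA : GSimple pa) {x : pa.SkewRing} (hx : x ∈ J) (hx0 : x ≠ 0) {e : A}
    (he : IsIdempotentElem e) : ∃ y ∈ J, y ∈ Ce S e ∧ pa.P 1 y = e := by
  obtain ⟨r, hr, h1, hmin⟩ := hJ.exists_one_mem_supp_minimal hD hx hx0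
  have hcoeff : coeffOne J (pa.supp r) = Set.univ :=
    (hA _ (hJ.isRingIdeal_coeffOne _) (hJ.gInvariant_coeffOne hD _)).resolve_left fun h ↦
      mem_supp.1 h1 (h.subset ⟨r, ⟨hr, subset_rfl⟩, rfl⟩)
  obtain ⟨z, ⟨hz, hzF⟩, hze⟩ := hcoeff.superset (Set.mem_univ e)
  let y := S.mul (pa.unitDelta e) (S.mul z (pa.unitDelta e))
  have hy : y ∈ J := hJ.mul_mem_left (hJ.mul_mem_right hz _) _
  have hyF : pa.supp y ⊆ pa.supp r :=
    (S.supp_unitDelta_mul_subset _ e).trans ((S.supp_mul_unitDelta_subset z e).trans hzF)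
  have hye : pa.P 1 y = e := by
    rw [S.P_unitDelta_mul, S.P_one_mul_unitDelta, hze, he.eq, he.eq]
  exact ⟨y, hy, hJ.mem_Ce_of_supp_minimal (finite_supp r) h1 hmin he hy hyF hye ⟨z, rfl⟩, hye⟩

theorem unitDelta_mem_of_gSimple (hJ : IsSkewIdeal S J)
    (hD : ∀ t, IsSUnital (pa.D t : Set A)) (hA : GSimple pa) {x : pa.SkewRing} (hx : x ∈ J)
    (hx0 : x ≠ 0) {e : A} (he : IsIdempotentElem e) (hC : S.CenterIsField e) :
    pa.unitDelta e ∈ J := by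
  obtain ⟨y, hy, hyC, hye⟩ := hJ.exists_mem_Ce_of_gSimple hD hA hx hx0 he
  rcases eq_or_ne y 0 with rfl | hy0
  · have hu : pa.unitDelta e = 0 := P_ext fun g ↦ by
      rw [P_unitDelta, ← hye, P_zero, ite_self, P_zero]
    exact hu ▸ hJ.1
  · obtain ⟨y', -, hyy', -⟩ := hC.2.2.2 y hyC hy0
    exact hyy' ▸ hJ.mul_mem_right hy y'

end CommGroup

end IsSkewIdeal

theorem simplicity_of_partial_skew_group_ring_general
    {G : Type*} [CommGroup G] [DecidableEq G] {A : Type*} [NonUnitalRing A]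
    (pa : RingPartialAction G A) (S : SkewMul pa)
    (E : Set A) (hE : ∀ e ∈ E, IsIdempotentElem e) (hEA : ∀ a, ∃ e ∈ E, e * a = a)
    (hD : ∀ t, IsSUnital (pa.D t : Set A)) :
    (∀ J : Set pa.SkewRing, IsSkewIdeal S J → J = {0} ∨ J = Set.univ) ↔
      GSimple pa ∧ ∀ e ∈ E, S.CenterIsField e := by
  refine ⟨fun hS ↦ ⟨SkewMul.gSimple_of_simple hS, fun e he ↦
    SkewMul.centerIsField_of_simple hS (hE e he)⟩, fun ⟨hA, hC⟩ J hJ ↦ ?_⟩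
  rcases Set.eq_singleton_or_nontrivial hJ.1 with h | h
  · exact Or.inl h
  · obtain ⟨x, hx, hx0⟩ := h.exists_ne 0
    exact Or.inr <| hJ.eq_univ_of_unitDelta_mem hEA fun e he ↦
      hJ.unitDelta_mem_of_gSimple hD hA hx hx0 (hE e he) (hC e he)

theorem simplicity_of_partial_skew_group_ring
    {G : Type*} [CommGroup G] [DecidableEq G] {A : Type*} [NonUnitalRing A]
    (pa : RingPartialAction G A) (S : SkewMul pa)
    (E : Set A) (hE : IsLocalUnitSet E)
    (hD : ∀ t : G, SubsetHasLocalUnits (pa.D t : Set A)) :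
    (∀ J : Set pa.SkewRing, IsSkewIdeal S J → J = {0} ∨ J = Set.univ) ↔
      (GSimple pa ∧ ∀ e ∈ E,
        -- `C_e` is a field: it is a commutative unital ring with identity `eδ_0` …
        (pa.unitDelta e ∈ Ce S e) ∧
        (∀ x ∈ Ce S e, S.mul (pa.unitDelta e) x = x ∧ S.mul x (pa.unitDelta e) = x) ∧
        (∀ x ∈ Ce S e, ∀ y ∈ Ce S e, S.mul x y = S.mul y x) ∧
        -- … in which every nonzero element is invertible.
        (∀ x ∈ Ce S e, x ≠ 0 →
          ∃ y ∈ Ce S e, S.mul x y = pa.unitDelta e ∧ S.mul y x = pa.unitDelta e)) := by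
  exact simplicity_of_partial_skew_group_ring_general pa S E hE.1
    (fun a ↦ (hE.2 {a}).imp fun _ h ↦ ⟨h.1, (h.2 a (Finset.mem_singleton_self a)).1⟩)
    fun t ↦ (hD t).isSUnital
end

section
/- Let θ = ({X_t}_{t∈G}, {h_t}_{t∈G}) be a free and minimal partial action of an abelian group G on a set X, let K be a field, let α be the induced partial action of G on F₀(X), and let R = F₀(X) ⋆_α G. Let A ⊆ X be a finite nonempty subset and e = χ_A. Then every nonzero element of C_e is of the form fδ_0 with f ∈ F₀(X) and supp(f) = A, and C_e is a field with identity eδ_0 (every nonzero element of C_e is invertible in C_e). -/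
/-- A partial action `θ = ({X_t}, {h_t})` of a group `G` on a set `X`: subsets
`Xt t ⊆ X` and bijections `h t : Xt t⁻¹ → Xt t` (encoded as globally defined maps
whose values only matter on `Xt t⁻¹`). -/
structure SetPartialAction (G : Type*) [Group G] (X : Type*) where
  Xt : G → Set X
  h : G → X → X
  h_mem : ∀ t, ∀ x ∈ Xt t⁻¹, h t x ∈ Xt t
  Xt_one : Xt 1 = Set.univ
  h_one : ∀ x, h 1 x = x
  h_left_inv : ∀ t, ∀ x ∈ Xt t⁻¹, h t⁻¹ (h t x) = x
  h_image : ∀ t s, h t '' (Xt t⁻¹ ∩ Xt s) = Xt t ∩ Xt (t * s)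
  h_comp : ∀ t s, ∀ x ∈ Xt s⁻¹, x ∈ Xt (s⁻¹ * t⁻¹) → h t (h s x) = h (t * s) x

namespace SetPartialAction

variable {G : Type*} [Group G] {X : Type*}

/-- A subset `V ⊆ X` is `G`-invariant if `h t (V ∩ Xt t⁻¹) ⊆ V` for all `t`. -/
def Invariant (θ : SetPartialAction G X) (V : Set X) : Prop :=
  ∀ t : G, θ.h t '' (V ∩ θ.Xt t⁻¹) ⊆ V

/-- `θ` is minimal if `∅` and `X` are the only `G`-invariant subsets of `X`. -/
def Minimal (θ : SetPartialAction G X) : Prop :=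
  ∀ V : Set X, θ.Invariant V → V = ∅ ∨ V = Set.univ

/-- `θ` is free if `h t x = x` for some `x ∈ Xt t⁻¹` implies `t = 1`. -/
def Free (θ : SetPartialAction G X) : Prop :=
  ∀ t : G, ∀ x ∈ θ.Xt t⁻¹, θ.h t x = x → t = 1

end SetPartialAction
section F0

variable {G : Type*} [Group G] {X : Type*} {K : Type*} [Field K]

/-- `F₀(V)`: the finitely supported functions `X → K` vanishing off `V`,
as a subset of `F₀(X) = X →₀ K`. -/
def F0 (K : Type*) [Field K] {X : Type*} (V : Set X) : Set (X →₀ K) :=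
  {f : X →₀ K | ∀ x ∉ V, f x = 0}

/-- `I` is a (two-sided) ring ideal of `F₀(X)`. -/
def IsIdealF0 {X : Type*} (K : Type*) [Field K] (I : Set (X →₀ K)) : Prop :=
  (0 : X →₀ K) ∈ I ∧ (∀ f ∈ I, ∀ g ∈ I, f + g ∈ I) ∧ (∀ f ∈ I, -f ∈ I) ∧
    (∀ f ∈ I, ∀ g : X →₀ K, f * g ∈ I ∧ g * f ∈ I)

open Classical in
/-- The induced map `α t : F₀(X) → F₀(X)`, `α t f = f ∘ h t⁻¹` on `Xt t`,
extended by zero off `Xt t`. -/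
noncomputable def amap (θ : SetPartialAction G X) (K : Type*) [Field K] (t : G)
    (f : X →₀ K) : X →₀ K :=
  Finsupp.onFinset (f.support.image (θ.h t))
    (fun x => if x ∈ θ.Xt t then f (θ.h t⁻¹ x) else 0)
    (by
      intro x hx
      by_cases hxt : x ∈ θ.Xt t
      · simp only [hxt, if_true] at hx
        have hmem : θ.h t⁻¹ x ∈ f.support := Finsupp.mem_support_iff.mpr hx
        refine Finset.mem_image.mpr ⟨θ.h t⁻¹ x, hmem, ?_⟩
        have := θ.h_left_inv t⁻¹ x (by simpa using hxt)
        simpa using this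
      · simp [hxt] at hx)

/-- `I ⊆ F₀(X)` is `G`-invariant: `α t (I ∩ D t⁻¹) ⊆ I ∩ D t`. -/
def GInvariantF0 (θ : SetPartialAction G X) (K : Type*) [Field K]
    (I : Set (X →₀ K)) : Prop :=
  ∀ t : G, ∀ f ∈ I, f ∈ F0 K (θ.Xt t⁻¹) →
    amap θ K t f ∈ I ∧ amap θ K t f ∈ F0 K (θ.Xt t)

end F0
section FSkew

variable {G : Type*} [Group G] {X : Type*}

/-- The ideal `D t = F₀(X_t)` of `F₀(X)`, as an additive subgroup. -/
def Dsub (θ : SetPartialAction G X) (K : Type*) [Field K] (t : G) :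
    AddSubgroup (X →₀ K) where
  carrier := F0 K (θ.Xt t)
  zero_mem' := by intro x _; simp
  add_mem' := by intro f g hf hg x hx; simp [hf x hx, hg x hx]
  neg_mem' := by intro f hf x hx; simp [hf x hx]

variable (K : Type*) [Field K]

/-- The underlying additive group of the partial skew group ring `F₀(X) ⋆_α G`. -/
abbrev SkewF0 (θ : SetPartialAction G X) (K : Type*) [Field K] : Type _ :=
  Π₀ t : G, ↥(Dsub θ K t)

/-- The element `f δ_t` for `f ∈ D t`. -/
noncomputable def deltaF [DecidableEq G] (θ : SetPartialAction G X) (t : G)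
    (f : X →₀ K) (hf : f ∈ Dsub θ K t) : SkewF0 θ K :=
  DFinsupp.single t ⟨f, hf⟩

/-- The element `f δ_0` for arbitrary `f ∈ F₀(X) = D 1`. -/
noncomputable def deltaF0 [DecidableEq G] (θ : SetPartialAction G X) (f : X →₀ K) :
    SkewF0 θ K :=
  deltaF K θ 1 f (by intro x hx; rw [θ.Xt_one] at hx; exact absurd (Set.mem_univ x) hx)

/-- The characteristic function `χ_A ∈ F₀(X)` of a finite set `A ⊆ X`. -/
noncomputable def chi (A : Finset X) : X →₀ K := Finsupp.indicator A fun _ _ => (1 : K)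

/-- The multiplication of `F₀(X) ⋆_α G`, *assumed* to exist, to be biadditive,
associative and to satisfy `(f δ_t)(g δ_s) = α_t(α_{t⁻¹}(f) g) δ_{ts}`. -/
structure FSkewMul [DecidableEq G] (θ : SetPartialAction G X) (K : Type*) [Field K] where
  mul : SkewF0 θ K → SkewF0 θ K → SkewF0 θ K
  left_distrib : ∀ x y z, mul x (y + z) = mul x y + mul x z
  right_distrib : ∀ x y z, mul (x + y) z = mul x z + mul y z
  mul_single : ∀ (t s : G) (a : X →₀ K) (ha : a ∈ Dsub θ K t)
      (b : X →₀ K) (hb : b ∈ Dsub θ K s) (g : G),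
    ((mul (deltaF K θ t a ha) (deltaF K θ s b hb)) g : X →₀ K) =
      if g = t * s then amap θ K t (amap θ K t⁻¹ a * b) else 0
  assoc : ∀ x y z, mul (mul x y) z = mul x (mul y z)

variable [DecidableEq G] {θ : SetPartialAction G X}

/-- `J` is a two-sided ideal of the partial skew group ring `F₀(X) ⋆_α G`. -/
def IsSkewIdealF0 (S : FSkewMul θ K) (J : Set (SkewF0 θ K)) : Prop :=
  (0 : SkewF0 θ K) ∈ J ∧ (∀ x ∈ J, ∀ y ∈ J, x + y ∈ J) ∧ (∀ x ∈ J, -x ∈ J) ∧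
    (∀ x ∈ J, ∀ y : SkewF0 θ K, S.mul x y ∈ J ∧ S.mul y x ∈ J)

/-- The corner `x R x` of the partial skew group ring. -/
def cornerF (S : FSkewMul θ K) (x : SkewF0 θ K) : Set (SkewF0 θ K) :=
  {y | ∃ z, y = S.mul x (S.mul z x)}

/-- `C_e` for `e = χ_A`: the center of the corner `eδ_0 R eδ_0`. -/
def CeF (S : FSkewMul θ K) (A : Finset X) : Set (SkewF0 θ K) :=
  {x ∈ cornerF K S (deltaF0 K θ (chi K A)) |
    ∀ y ∈ cornerF K S (deltaF0 K θ (chi K A)), S.mul x y = S.mul y x}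

end FSkew

/-!
Everything is read off from commuting an element `x` of `C_e` with the monomials `χ_{p} δ_t` of the
corner, which are those with `p ∈ A` and `h t⁻¹ p ∈ A`. Comparing the coefficients of
`x · χ_{p} δ_1` and `χ_{p} δ_1 · x` at `(g, p)` gives `x g p = 0` unless `h g⁻¹ p = p`, so freeness
leaves only the coefficient at `1`. Comparing those of `x · χ_{p} δ_t` and `χ_{p} δ_t · x` at
`(t, p)` gives `x 1 p = x 1 (h t⁻¹ p)`, and by minimality any two points of `A` are related in this
way. Hence `C_e` consists of the scalar multiples of `χ_A δ_1` and is a copy of `K`.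
-/

namespace SetPartialAction

variable {G : Type*} [Group G] {X : Type*} {θ : SetPartialAction G X} {t : G} {p q : X}

theorem h_inv_mem (hp : p ∈ θ.Xt t) : θ.h t⁻¹ p ∈ θ.Xt t⁻¹ :=
  θ.h_mem t⁻¹ p (by rwa [inv_inv])

theorem h_h_inv (hp : p ∈ θ.Xt t) : θ.h t (θ.h t⁻¹ p) = p := by
  simpa using θ.h_left_inv t⁻¹ p (by rwa [inv_inv])

theorem Free.eq_one_of_h_inv_eq (hfree : θ.Free) (hp : p ∈ θ.Xt t) (h : θ.h t⁻¹ p = p) : t = 1 :=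
  inv_eq_one.mp (hfree t⁻¹ p (by rwa [inv_inv]) h)

theorem mem_Xt_inv_mul_inv {s : G} (hq : q ∈ θ.Xt t⁻¹) (h : θ.h t q ∈ θ.Xt s⁻¹) :
    q ∈ θ.Xt (t⁻¹ * s⁻¹) := by
  have himage : θ.h t q ∈ θ.h t '' (θ.Xt t⁻¹ ∩ θ.Xt (t⁻¹ * s⁻¹)) := by
    rw [θ.h_image, mul_inv_cancel_left]
    exact ⟨θ.h_mem t q hq, h⟩
  obtain ⟨r, ⟨hr, hr'⟩, hrq⟩ := himage
  have : r = q := by rw [← θ.h_left_inv t r hr, hrq, θ.h_left_inv t q hq]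
  exact this ▸ hr'

variable (θ q) in
/-- The orbit of `q` under a partial action: the points `h t q` for those `t` at which `h t q` is
defined, that is, for which `q ∈ Xt t⁻¹`. -/
def orbit : Set X :=
  {p | ∃ t, q ∈ θ.Xt t⁻¹ ∧ θ.h t q = p}

theorem mem_orbit_self : q ∈ θ.orbit q :=
  ⟨1, by simp [θ.Xt_one], θ.h_one q⟩

theorem invariant_orbit : θ.Invariant (θ.orbit q) := by
  rintro s _ ⟨_, ⟨⟨t, hq, rfl⟩, hs⟩, rfl⟩
  have hts := mem_Xt_inv_mul_inv hq hs
  exact ⟨s * t, by rwa [mul_inv_rev], (θ.h_comp s t q hq hts).symm⟩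

theorem Minimal.orbit_eq_univ (hmin : θ.Minimal) : θ.orbit q = Set.univ :=
  (hmin _ invariant_orbit).resolve_left (Set.nonempty_of_mem mem_orbit_self).ne_empty

end SetPartialAction

section CharacteristicFunction

variable {X : Type*} {K : Type*} [Field K] {A : Finset X} {p : X}

theorem chi_of_mem (hp : p ∈ A) : chi K A p = 1 :=
  Finsupp.indicator_of_mem hp _

theorem chi_of_notMem (hp : p ∉ A) : chi K A p = 0 :=
  Finsupp.indicator_of_notMem hp _

theorem chi_ne_zero_iff : chi K A p ≠ 0 ↔ p ∈ A := by
  by_cases hp : p ∈ A <;> simp [chi_of_mem, chi_of_notMem, hp]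

theorem smul_chi_mul_smul_chi (c d : K) : c • chi K A * d • chi K A = (c * d) • chi K A := by
  ext p
  by_cases hp : p ∈ A <;> simp [chi_of_mem, chi_of_notMem, hp]

theorem support_smul_chi {c : K} (hc : c ≠ 0) : (c • chi K A).support = A := by
  ext p
  simp [hc, chi_ne_zero_iff.not_right]

end CharacteristicFunction

section InducedAction

variable {G : Type*} [Group G] {X : Type*} {θ : SetPartialAction G X} {K : Type*} [Field K]
  {t : G} {p : X}

theorem amap_apply_of_mem (f : X →₀ K) (hp : p ∈ θ.Xt t) :
    amap θ K t f p = f (θ.h t⁻¹ p) := by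
  simp [amap, hp]

theorem amap_apply_of_notMem (f : X →₀ K) (hp : p ∉ θ.Xt t) : amap θ K t f p = 0 := by
  simp [amap, hp]

theorem amap_amap_inv_mul_apply {a : X →₀ K} (ha : a ∈ Dsub θ K t) (b : X →₀ K) (p : X) :
    amap θ K t (amap θ K t⁻¹ a * b) p = a p * b (θ.h t⁻¹ p) := by
  by_cases hp : p ∈ θ.Xt t
  · rw [amap_apply_of_mem _ hp, Finsupp.mul_apply,
      amap_apply_of_mem _ (SetPartialAction.h_inv_mem hp), inv_inv, SetPartialAction.h_h_inv hp]
  · rw [amap_apply_of_notMem _ hp, ha p hp, zero_mul]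

theorem mem_Dsub_one (f : X →₀ K) : f ∈ Dsub θ K 1 :=
  fun p hp => absurd (θ.Xt_one ▸ Set.mem_univ p) hp

theorem single_mem_Dsub (hp : p ∈ θ.Xt t) (c : K) : Finsupp.single p c ∈ Dsub θ K t :=
  fun _ hq => Finsupp.single_eq_of_ne fun h => hq (h ▸ hp)

end InducedAction

namespace SkewF0

variable {G : Type*} [Group G] {X : Type*} {θ : SetPartialAction G X} {K : Type*} [Field K]

/-- The value at `p ∈ X` of the `g`-th component of an element of `F₀(X) ⋆_α G`. Its type does not
depend on `g`, so equal group elements can be rewritten into each other under it. -/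
noncomputable def coeff (g : G) (p : X) : SkewF0 θ K →+ K :=
  (Finsupp.applyAddHom p).comp ((Dsub θ K g).subtype.comp (DFinsupp.evalAddMonoidHom g))

theorem coeff_apply (x : SkewF0 θ K) (g : G) (p : X) : coeff g p x = (x g : X →₀ K) p :=
  rfl

theorem ext_coeff {x y : SkewF0 θ K} (h : ∀ g p, coeff g p x = coeff g p y) : x = y := by
  ext g p
  exact h g p

theorem mem_Xt_of_coeff_ne_zero {x : SkewF0 θ K} {g : G} {p : X} (h : coeff g p x ≠ 0) :
    p ∈ θ.Xt g :=
  not_imp_comm.mp ((x g).2 p) h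

variable [DecidableEq G]

theorem deltaF_apply {t : G} {f : X →₀ K} (hf : f ∈ Dsub θ K t) (g : G) :
    (deltaF K θ t f hf g : X →₀ K) = if g = t then f else 0 := by
  split_ifs with h
  · subst h
    simp [deltaF]
  · simp [deltaF, DFinsupp.single_eq_of_ne h]

theorem deltaF0_apply (f : X →₀ K) (g : G) :
    (deltaF0 K θ f g : X →₀ K) = if g = 1 then f else 0 :=
  deltaF_apply (mem_Dsub_one f) g

theorem coeff_deltaF {t : G} {f : X →₀ K} (hf : f ∈ Dsub θ K t) (g : G) (p : X) :
    coeff g p (deltaF K θ t f hf) = if g = t then f p else 0 := by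
  rw [coeff_apply, deltaF_apply]
  split_ifs <;> rfl

theorem coeff_deltaF0 (f : X →₀ K) (g : G) (p : X) :
    coeff g p (deltaF0 K θ f) = if g = 1 then f p else 0 :=
  coeff_deltaF (mem_Dsub_one f) g p

theorem deltaF0_zero : deltaF0 K θ 0 = 0 :=
  ext_coeff fun g p => by simp [coeff_deltaF0]

end SkewF0

open SkewF0

namespace FSkewMul

variable {G : Type*} [Group G] [DecidableEq G] {X : Type*} {θ : SetPartialAction G X}
  {K : Type*} [Field K] (S : FSkewMul θ K)

protected theorem mul_zero (x : SkewF0 θ K) : S.mul x 0 = 0 := by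
  simpa using S.left_distrib x 0 0

protected theorem zero_mul (x : SkewF0 θ K) : S.mul 0 x = 0 := by
  simpa using S.right_distrib 0 0 x

theorem coeff_deltaF_mul_deltaF {t s : G} {a b : X →₀ K} (ha : a ∈ Dsub θ K t)
    (hb : b ∈ Dsub θ K s) (g : G) (p : X) :
    coeff g p (S.mul (deltaF K θ t a ha) (deltaF K θ s b hb)) =
      if g = t * s then a p * b (θ.h t⁻¹ p) else 0 := by
  rw [coeff_apply, S.mul_single]
  split_ifs
  · exact amap_amap_inv_mul_apply ha b p
  · rfl

theorem coeff_deltaF_mul {t : G} {a : X →₀ K} (ha : a ∈ Dsub θ K t) (x : SkewF0 θ K)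
    (g : G) (p : X) :
    coeff g p (S.mul (deltaF K θ t a ha) x) = a p * coeff (t⁻¹ * g) (θ.h t⁻¹ p) x := by
  induction x using DFinsupp.induction with
  | h0 => simp [S.mul_zero]
  | ha s b y _ _ ih =>
    have hsingle : coeff g p (S.mul (deltaF K θ t a ha) (deltaF K θ s b b.2)) =
        a p * coeff (t⁻¹ * g) (θ.h t⁻¹ p) (deltaF K θ s b b.2) := by
      simp [coeff_deltaF_mul_deltaF, coeff_deltaF, inv_mul_eq_iff_eq_mul]
    rw [S.left_distrib, map_add, map_add, ih, mul_add]
    exact congrArg (· + _) hsingle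

theorem coeff_mul_deltaF {s : G} {b : X →₀ K} (hb : b ∈ Dsub θ K s) (x : SkewF0 θ K)
    (g : G) (p : X) :
    coeff g p (S.mul x (deltaF K θ s b hb)) =
      coeff (g * s⁻¹) p x * b (θ.h (g * s⁻¹)⁻¹ p) := by
  induction x using DFinsupp.induction with
  | h0 => simp [S.zero_mul]
  | ha t a y _ _ ih =>
    have hsingle : coeff g p (S.mul (deltaF K θ t a a.2) (deltaF K θ s b hb)) =
        coeff (g * s⁻¹) p (deltaF K θ t a a.2) * b (θ.h (g * s⁻¹)⁻¹ p) := by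
      rw [coeff_deltaF_mul_deltaF, coeff_deltaF]
      by_cases h : g = t * s
      · simp [h]
      · simp [h, mul_inv_eq_iff_eq_mul]
    rw [S.right_distrib, map_add, map_add, ih, add_mul]
    exact congrArg (· + _) hsingle

theorem coeff_deltaF0_mul (f : X →₀ K) (x : SkewF0 θ K) (g : G) (p : X) :
    coeff g p (S.mul (deltaF0 K θ f) x) = f p * coeff g p x := by
  simpa [deltaF0, θ.h_one] using S.coeff_deltaF_mul (mem_Dsub_one f) x g p

theorem coeff_mul_deltaF0 (f : X →₀ K) (x : SkewF0 θ K) (g : G) (p : X) :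
    coeff g p (S.mul x (deltaF0 K θ f)) = coeff g p x * f (θ.h g⁻¹ p) := by
  simpa [deltaF0] using S.coeff_mul_deltaF (mem_Dsub_one f) x g p

theorem deltaF0_mul_deltaF0 (f f' : X →₀ K) :
    S.mul (deltaF0 K θ f) (deltaF0 K θ f') = deltaF0 K θ (f * f') :=
  ext_coeff fun g p => by simp [coeff_deltaF0_mul, coeff_deltaF0]

end FSkewMul

section CenterOfCorner

variable {G : Type*} [Group G] [DecidableEq G] {X : Type*} {θ : SetPartialAction G X}
  {K : Type*} [Field K] {S : FSkewMul θ K} {A : Finset X} {x : SkewF0 θ K} {p q : X}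

theorem mem_cornerF_chi_iff :
    x ∈ cornerF K S (deltaF0 K θ (chi K A)) ↔
      ∀ g p, coeff g p x ≠ 0 → p ∈ A ∧ θ.h g⁻¹ p ∈ A := by
  have hcoeff (z : SkewF0 θ K) (g : G) (p : X) :
      coeff g p (S.mul (deltaF0 K θ (chi K A)) (S.mul z (deltaF0 K θ (chi K A)))) =
        chi K A p * (coeff g p z * chi K A (θ.h g⁻¹ p)) := by
    rw [S.coeff_deltaF0_mul, S.coeff_mul_deltaF0]
  constructor
  · rintro ⟨z, rfl⟩ g p h
    rw [hcoeff] at h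
    exact ⟨chi_ne_zero_iff.mp (left_ne_zero_of_mul h),
      chi_ne_zero_iff.mp (right_ne_zero_of_mul (right_ne_zero_of_mul h))⟩
  · refine fun h => ⟨x, ext_coeff fun g p => ?_⟩
    rw [hcoeff]
    by_cases h0 : coeff g p x = 0
    · simp [h0]
    · rw [chi_of_mem (h g p h0).1, chi_of_mem (h g p h0).2, one_mul, mul_one]

theorem deltaF_single_mem_cornerF_chi {t : G} (ht : p ∈ θ.Xt t) (c : K) (hp : p ∈ A)
    (hp' : θ.h t⁻¹ p ∈ A) :
    deltaF K θ t (Finsupp.single p c) (single_mem_Dsub ht c) ∈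
      cornerF K S (deltaF0 K θ (chi K A)) := by
  refine mem_cornerF_chi_iff.mpr fun g r h => ?_
  rw [coeff_deltaF] at h
  obtain ⟨rfl, hr⟩ := ite_ne_right_iff.mp h
  obtain rfl : r = p := of_not_not fun hne => hr (Finsupp.single_eq_of_ne hne)
  exact ⟨hp, hp'⟩

theorem deltaF0_smul_chi_mem_CeF (c : K) : deltaF0 K θ (c • chi K A) ∈ CeF K S A := by
  refine ⟨mem_cornerF_chi_iff.mpr fun g p h => ?_, fun y hy => ext_coeff fun g p => ?_⟩
  · rw [coeff_deltaF0] at h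
    obtain ⟨rfl, hc⟩ := ite_ne_right_iff.mp h
    have hp : p ∈ A := chi_ne_zero_iff.mp (right_ne_zero_of_mul hc)
    simpa [θ.h_one] using hp
  · rw [S.coeff_deltaF0_mul, S.coeff_mul_deltaF0, mul_comm]
    by_cases h0 : coeff g p y = 0
    · simp [h0]
    · obtain ⟨hp, hp'⟩ := mem_cornerF_chi_iff.mp hy g p h0
      simp [chi_of_mem, hp, hp']

theorem eq_one_of_coeff_ne_zero_of_mem_CeF (hfree : θ.Free) (hx : x ∈ CeF K S A) {g : G}
    (h : coeff g p x ≠ 0) : g = 1 := by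
  have hpA : p ∈ A := (mem_cornerF_chi_iff.mp hx.1 g p h).1
  have hp1 : p ∈ θ.Xt 1 := θ.Xt_one ▸ Set.mem_univ p
  have hcomm := congrArg (coeff g p) <|
    hx.2 _ (deltaF_single_mem_cornerF_chi hp1 1 hpA (by rwa [inv_one, θ.h_one]))
  have hfix : θ.h g⁻¹ p = p := by
    by_contra hne
    refine h (Eq.symm ?_)
    simpa [S.coeff_mul_deltaF, S.coeff_deltaF_mul, θ.h_one, Finsupp.single_eq_of_ne hne] using hcomm
  exact hfree.eq_one_of_h_inv_eq (mem_Xt_of_coeff_ne_zero h) hfix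

theorem coeff_one_eq_of_mem_orbit_of_mem_CeF (hx : x ∈ CeF K S A) (hq : q ∈ A) (hp : p ∈ A)
    (hpq : p ∈ θ.orbit q) : coeff 1 p x = coeff 1 q x := by
  obtain ⟨t, hqt, rfl⟩ := hpq
  have hinv : θ.h t⁻¹ (θ.h t q) = q := θ.h_left_inv t q hqt
  have hcomm := congrArg (coeff t (θ.h t q)) <|
    hx.2 _ (deltaF_single_mem_cornerF_chi (θ.h_mem t q hqt) 1 hp (by rwa [hinv]))
  simpa [S.coeff_mul_deltaF, S.coeff_deltaF_mul, θ.h_one, hinv] using hcomm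

theorem eq_deltaF0_smul_chi_of_mem_CeF (hfree : θ.Free) (hmin : θ.Minimal)
    (hx : x ∈ CeF K S A) (hq : q ∈ A) : x = deltaF0 K θ (coeff 1 q x • chi K A) := by
  refine ext_coeff fun g p => ?_
  rw [coeff_deltaF0]
  split_ifs with hg
  · subst hg
    rw [Finsupp.smul_apply, smul_eq_mul]
    by_cases hp : p ∈ A
    · rw [chi_of_mem hp, mul_one]
      exact coeff_one_eq_of_mem_orbit_of_mem_CeF hx hq hp (hmin.orbit_eq_univ ▸ Set.mem_univ p)
    · rw [chi_of_notMem hp, mul_zero]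
      exact of_not_not fun h => hp (mem_cornerF_chi_iff.mp hx.1 1 p h).1
  · exact of_not_not fun h => hg (eq_one_of_coeff_ne_zero_of_mem_CeF hfree hx h)

theorem mem_CeF_iff_exists_smul_chi (hfree : θ.Free) (hmin : θ.Minimal) (hA : A.Nonempty) :
    x ∈ CeF K S A ↔ ∃ c : K, x = deltaF0 K θ (c • chi K A) := by
  constructor
  · obtain ⟨q, hq⟩ := hA
    exact fun hx => ⟨_, eq_deltaF0_smul_chi_of_mem_CeF hfree hmin hx hq⟩
  · rintro ⟨c, rfl⟩
    exact deltaF0_smul_chi_mem_CeF c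

theorem deltaF0_smul_chi_ne_zero_iff (hA : A.Nonempty) {c : K} :
    deltaF0 K θ (c • chi K A) ≠ 0 ↔ c ≠ 0 := by
  obtain ⟨q, hq⟩ := hA
  refine not_congr ⟨fun h => ?_, fun h => by rw [h, zero_smul, deltaF0_zero]⟩
  simpa [coeff_deltaF0, chi_of_mem hq] using congrArg (coeff 1 q) h

end CenterOfCorner

theorem Ce_is_field_of_free_minimal_general
    {G : Type*} [Group G] [DecidableEq G] {X : Type*}
    (θ : SetPartialAction G X) (hfree : θ.Free) (hmin : θ.Minimal)
    (K : Type*) [Field K] (S : FSkewMul θ K) (A : Finset X) (hA : A.Nonempty) :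
    (∀ x ∈ CeF K S A, x ≠ 0 →
      (∀ g : G, g ≠ 1 → ((x g : X →₀ K) = 0)) ∧ ((x (1 : G) : X →₀ K).support = A)) ∧
    (deltaF0 K θ (chi K A) ∈ CeF K S A ∧ deltaF0 K θ (chi K A) ≠ 0) ∧
    (∀ x ∈ CeF K S A,
      S.mul (deltaF0 K θ (chi K A)) x = x ∧ S.mul x (deltaF0 K θ (chi K A)) = x) ∧
    (∀ x ∈ CeF K S A, x ≠ 0 →
      ∃ y ∈ CeF K S A,
        S.mul x y = deltaF0 K θ (chi K A) ∧ S.mul y x = deltaF0 K θ (chi K A)) := by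
  have hmul (c d : K) : S.mul (deltaF0 K θ (c • chi K A)) (deltaF0 K θ (d • chi K A)) =
      deltaF0 K θ ((c * d) • chi K A) := by
    rw [S.deltaF0_mul_deltaF0, smul_chi_mul_smul_chi]
  rw [← one_smul K (chi K A)]
  simp only [mem_CeF_iff_exists_smul_chi hfree hmin hA, forall_exists_index,
    forall_eq_apply_imp_iff, deltaF0_smul_chi_ne_zero_iff hA]
  refine ⟨fun c hc => ⟨fun g hg => ?_, ?_⟩, ⟨⟨1, rfl⟩, one_ne_zero⟩, fun c => ?_, fun c hc => ?_⟩
  · rw [deltaF0_apply, if_neg hg]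
  · rw [deltaF0_apply, if_pos rfl, support_smul_chi hc]
  · rw [hmul, hmul, one_mul, mul_one]
    exact ⟨rfl, rfl⟩
  · refine ⟨_, ⟨c⁻¹, rfl⟩, ?_⟩
    rw [hmul, hmul, mul_inv_cancel₀ hc, inv_mul_cancel₀ hc]
    exact ⟨rfl, rfl⟩

theorem Ce_is_field_of_free_minimal
    {G : Type*} [CommGroup G] [DecidableEq G] {X : Type*}
    (θ : SetPartialAction G X) (hfree : θ.Free) (hmin : θ.Minimal)
    (K : Type*) [Field K] (S : FSkewMul θ K) (A : Finset X) (hA : A.Nonempty) :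
    -- every nonzero element of `C_e` is of the form `f δ_0` with `supp f = A` …
    (∀ x ∈ CeF K S A, x ≠ 0 →
      (∀ g : G, g ≠ 1 → ((x g : X →₀ K) = 0)) ∧ ((x (1 : G) : X →₀ K).support = A)) ∧
    -- … and `C_e` is a field with identity `e δ_0`:
    (deltaF0 K θ (chi K A) ∈ CeF K S A) ∧
    (∀ x ∈ CeF K S A,
      S.mul (deltaF0 K θ (chi K A)) x = x ∧ S.mul x (deltaF0 K θ (chi K A)) = x) ∧
    (∀ x ∈ CeF K S A, x ≠ 0 →
      ∃ y ∈ CeF K S A,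
        S.mul x y = deltaF0 K θ (chi K A) ∧ S.mul y x = deltaF0 K θ (chi K A)) := by
  have ⟨hform, ⟨hmem, _⟩, hone, hinv⟩ := Ce_is_field_of_free_minimal_general θ hfree hmin K S A hA
  exact ⟨hform, hmem, hone, hinv⟩
end
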